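/- Let Γ : ℝ × ℝ → L(X) be such that (t,s) ↦ Γ(t,s)x is continuous on {(t,s) : t ≠ s} for each x ∈ X, and suppose there exist M > 0 and ω > 0 with ‖Γ(t,s)‖_{L(X)} ≤ M·e^{−ω|t−s|} for all t, s ∈ ℝ. Suppose moreover that for every trigonometric polynomial P : ℝ → X the functions t ↦ ∫_{−∞}^{t} Γ(t,s) P(s) ds and t ↦ ∫_{t}^{+∞} Γ(t,s) P(s) ds are Bohr almost periodic. Let a > 0, α > 0, p ∈ [1,∞) with αp ≥ 1 and ap ≥ 1, and let f : ℝ → X be Lebesgue measurable, bounded, and belong to e-(x^α, t^{−a})-B^p(ℝ : X). Then the function u(t) := ∫_{−∞}^{+∞} Γ(t,s) f(s) ds is well-defined, bounded, continuous, and belongs to e-(x^α, t^{−a})-B^p(ℝ : X). -/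

import Mathlib

open MeasureTheory Filter Topology ENNReal NNReal

noncomputable section

/-- A trigonometric polynomial `P : ℝ → X`: a finite sum `P(t) = Σ_j e^{iλ_j t} c_j`. -/
def IsTrigPoly1 {X : Type*} [NormedAddCommGroup X] [NormedSpace ℂ X] (P : ℝ → X) : Prop :=
  ∃ (m : ℕ) (lam : Fin m → ℝ) (c : Fin m → X),
    ∀ t : ℝ, P t = ∑ j, Complex.exp (Complex.I * ((lam j * t : ℝ) : ℂ)) • c j

/-- Membership in the class `e-(x^α, t^{−a})-B^p(ℝ : X)`. -/
def MemBes1 {X : Type*} [NormedAddCommGroup X] [NormedSpace ℂ X]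
    (α a p : ℝ) (g : ℝ → X) : Prop :=
  ∃ P : ℕ → ℝ → X, (∀ k, IsTrigPoly1 (P k)) ∧
    Tendsto (fun k => limsup (fun t : ℝ =>
      ENNReal.ofReal (t ^ (-a)) *
        (∫⁻ s in Set.Icc (-t) t, ENNReal.ofReal (‖g s - P k s‖ ^ (α * p))) ^ (1 / p))
      atTop) atTop (𝓝 (0 : ℝ≥0∞))

/-- `g : ℝ → X` is Bohr almost periodic. -/
def BohrAP1 {X : Type*} [NormedAddCommGroup X] (g : ℝ → X) : Prop :=
  Continuous g ∧ ∀ ε : ℝ, 0 < ε → ∃ l : ℝ, 0 < l ∧ ∀ t₀ : ℝ,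
    ∃ τ ∈ Set.Icc t₀ (t₀ + l), ∀ t : ℝ, ‖g (t + τ) - g t‖ ≤ ε

/-!
The heart of the matter is Bohr's theorem that an almost periodic function `g` with values in a
Banach space is a uniform limit of trigonometric polynomials. The seminorm
`τ ↦ sup_t ‖g (t + τ) - g t‖` on `ℝ` is totally bounded, so the completion `K` of `ℝ` for it is a
compact group, and `g` factors through a continuous function on `K`. On a compact abelian group the
convolution operators by even functions are compact, self-adjoint and commute with translations, so
their nonzero eigenspaces are finite-dimensional and contain common eigenvectors of all the
translations, namely characters. Hence the characters separate points, and Stone–Weierstrass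
applies; on `ℝ` the characters are the exponentials.

It follows that `f ↦ ∫ Γ(·, s) f(s) ds` sends trigonometric polynomials to uniform limits of such.
On bounded functions it satisfies `∫_{[-t, t]} ‖u‖^q ≤ A ∫_{[-t, t]} ‖f‖^q + D` with `q = αp`, by
Jensen's inequality and Tonelli's theorem for the kernel `e^{-ω|t-s|}`. Applied to `f - P_k`, this
transfers the approximation of `f` to `u`: the errors left over grow at most linearly in `t`, with
arbitrarily small slope, and are absorbed by `t^{-a}` since `ap ≥ 1`.
-/

theorem exists_mem_forall_apply_eq_smul_of_commute {ι k V : Type*} [Field k] [IsAlgClosed k]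
    [AddCommGroup V] [Module k V] (f : ι → Module.End k V) (hf : ∀ i j, Commute (f i) (f j))
    (F : Submodule k V) [FiniteDimensional k F] (hF : F ≠ ⊥)
    (hinv : ∀ i, ∀ v ∈ F, f i v ∈ F) :
    ∃ v ∈ F, v ≠ 0 ∧ ∀ i, ∃ c : k, f i v = c • v := by
  induction hn : Module.finrank k F using Nat.strong_induction_on generalizing F with
  | _ n ih =>
  by_cases hscalar : ∀ i, ∃ c : k, ∀ v ∈ F, f i v = c • v
  · obtain ⟨v, hv, hv0⟩ := Submodule.exists_mem_ne_zero_of_ne_bot hF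
    exact ⟨v, hv, hv0, fun i => (hscalar i).imp fun c hc => hc v hv⟩
  · push Not at hscalar
    obtain ⟨i, hi⟩ := hscalar
    have : Nontrivial F := Submodule.nontrivial_iff_ne_bot.2 hF
    obtain ⟨c, hc⟩ := Module.End.exists_eigenvalue ((f i).restrict (hinv i))
    obtain ⟨w, hw⟩ := hc.exists_hasEigenvector
    have hwc : f i w = c • (w : V) := congrArg Subtype.val hw.apply_eq_smul
    obtain ⟨u, huF, huc⟩ := hi c
    let F' := F ⊓ Module.End.eigenspace (f i) c
    have hlt : F' < F := inf_lt_left.2 fun hle =>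
      huc (Module.End.mem_eigenspace_iff.1 (hle huF))
    have : FiniteDimensional k F' := Submodule.finiteDimensional_of_le hlt.le
    have hF' : F' ≠ ⊥ := Submodule.ne_bot_iff _ |>.2
      ⟨w, ⟨w.2, Module.End.mem_eigenspace_iff.2 hwc⟩, by simpa using hw.2⟩
    obtain ⟨v, hv, h⟩ := ih _ (hn ▸ Submodule.finrank_lt_finrank_of_lt hlt) F' hF'
      (fun j v hv => ⟨hinv j v hv.1,
        Module.End.mapsTo_genEigenspace_of_comm (hf i j) c 1 hv.2⟩) rfl
    exact ⟨v, hlt.le hv, h⟩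

theorem isCompact_closure_of_equicontinuous_of_norm_le {K E : Type*} [TopologicalSpace K]
    [CompactSpace K] [NormedAddCommGroup E] [ProperSpace E] {A : Set C(K, E)} {C : ℝ}
    (hbdd : ∀ f ∈ A, ‖f‖ ≤ C) (hequi : Equicontinuous fun f : A => ⇑(f : C(K, E))) :
    IsCompact (closure A) := by
  let e := (ContinuousMap.isometryEquivBoundedOfCompact K E).toHomeomorph
  have himage : IsCompact (closure (e '' A)) := by
    refine BoundedContinuousFunction.arzela_ascoli (Metric.closedBall 0 C)
      (isCompact_closedBall _ _) _ ?_ ?_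
    · rintro _ x ⟨f, hf, rfl⟩
      exact mem_closedBall_zero_iff.2 ((f.norm_coe_le_norm x).trans (hbdd f hf))
    · refine fun x₀ U hU => (hequi x₀ U hU).mono ?_
      rintro x hx ⟨_, f, hf, rfl⟩
      exact hx ⟨f, hf⟩
  rwa [← e.image_closure, e.isCompact_image] at himage

section InnerOperator

variable {𝕜 K H : Type*} [RCLike 𝕜] [TopologicalSpace K] [CompactSpace K]
  [NormedAddCommGroup H] [InnerProductSpace 𝕜 H]

/-- The integral operator `f ↦ (x ↦ ⟪κ x, f⟫)` with continuous kernel `κ`; taking values in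
continuous functions rather than in `H`-classes makes its compactness an instance of
Arzelà–Ascoli. -/
def kernelOperator (κ : C(K, H)) : H →L[𝕜] C(K, 𝕜) :=
  LinearMap.mkContinuous
    { toFun := fun f => ⟨fun x => inner 𝕜 (κ x) f, by fun_prop⟩
      map_add' := fun f g => by ext x; exact inner_add_right _ _ _
      map_smul' := fun c f => by ext x; exact inner_smul_right _ _ _ }
    ‖κ‖ fun f => (ContinuousMap.norm_le _ (by positivity)).2 fun x =>
      (norm_inner_le_norm _ _).trans (by gcongr; exact κ.norm_coe_le_norm x)

theorem isCompactOperator_kernelOperator (κ : C(K, H)) :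
    IsCompactOperator (kernelOperator (𝕜 := 𝕜) κ) := by
  refine (isCompactOperator_iff_isCompact_closure_image_closedBall
    (kernelOperator (𝕜 := 𝕜) κ).toLinearMap one_pos).2 ?_
  refine isCompact_closure_of_equicontinuous_of_norm_le (C := ‖kernelOperator (𝕜 := 𝕜) κ‖) ?_ ?_
  · rintro _ ⟨f, hf, rfl⟩
    exact ContinuousLinearMap.unit_le_opNorm _ _ (mem_closedBall_zero_iff.1 hf)
  · refine fun x₀ => Metric.equicontinuousAt_of_continuity_modulus (fun x => dist (κ x₀) (κ x)) ?_ _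
      (Eventually.of_forall ?_)
    · exact (continuous_const.dist κ.continuous).tendsto' _ _ (dist_self _)
    · rintro x ⟨_, f, hf, rfl⟩
      calc dist (inner 𝕜 (κ x₀) f) (inner 𝕜 (κ x) f)
          = ‖inner 𝕜 (κ x₀ - κ x) f‖ := by rw [dist_eq_norm, inner_sub_left]
        _ ≤ ‖κ x₀ - κ x‖ * ‖f‖ := norm_inner_le_norm _ _
        _ ≤ ‖κ x₀ - κ x‖ * 1 := by gcongr; exact mem_closedBall_zero_iff.1 hf
        _ = dist (κ x₀) (κ x) := by rw [mul_one, dist_eq_norm]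

end InnerOperator

theorem apply_eq_zero_of_forall_eigenvalue_eq_zero {𝕜 H : Type*} [RCLike 𝕜]
    [NormedAddCommGroup H] [InnerProductSpace 𝕜 H] {T : H →L[𝕜] H} (hT : IsCompactOperator T)
    (hsymm : T.IsSymmetric) {V : Submodule 𝕜 H} [CompleteSpace V] (hV : ∀ v ∈ V, T v ∈ V)
    (heigen : ∀ w ∈ V, w ≠ 0 → ∀ c : 𝕜, T w = c • w → c = 0) {f : H} (hf : f ∈ V) : T f = 0 := by
  have hzero : T.restrict hV = 0 := by
    refine (ContinuousLinearMap.eq_zero_of_forall_hasEigenvalue_eq_zero (hT.restrict' hV)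
      (hsymm.restrict_invariant hV)).1 fun c hc => ?_
    obtain ⟨w, hw⟩ := hc.exists_hasEigenvector
    exact heigen w w.2 (by simpa using hw.2) c (congrArg Subtype.val hw.apply_eq_smul)
  exact congrArg Subtype.val (DFunLike.congr_fun hzero ⟨f, hf⟩)

/-! ### Characters of a compact abelian group -/

section Character

variable {K : Type*} [AddCommGroup K] [TopologicalSpace K]

/-- Continuous characters of a topological additive group, with values in `ℂ`. On a compact group
they are automatically unitary, see `IsCharacter.norm_apply`. -/
structure IsCharacter (χ : C(K, ℂ)) : Prop where
  map_zero : χ 0 = 1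
  map_add : ∀ x y, χ (x + y) = χ x * χ y

theorem isCharacter_one : IsCharacter (1 : C(K, ℂ)) := ⟨rfl, fun _ _ => (one_mul 1).symm⟩

namespace IsCharacter

variable {χ ψ : C(K, ℂ)}

theorem mul (hχ : IsCharacter χ) (hψ : IsCharacter ψ) : IsCharacter (χ * ψ) where
  map_zero := by simp [hχ.map_zero, hψ.map_zero]
  map_add x y := by
    simp only [ContinuousMap.mul_apply, hχ.map_add, hψ.map_add, mul_mul_mul_comm]

theorem star (hχ : IsCharacter χ) : IsCharacter (star χ) where
  map_zero := by simp [hχ.map_zero]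
  map_add x y := by simp [hχ.map_add]

theorem ne_zero (hχ : IsCharacter χ) : χ ≠ 0 := by
  rintro rfl
  exact zero_ne_one hχ.map_zero

variable [CompactSpace K]

theorem norm_apply_le_one (hχ : IsCharacter χ) (x : K) : ‖χ x‖ ≤ 1 := by
  have hle : ‖χ x‖ * ‖χ‖ ≤ 1 * ‖χ‖ := by
    rw [← norm_smul, one_mul]
    refine (ContinuousMap.norm_le _ (norm_nonneg _)).2 fun y => ?_
    rw [ContinuousMap.smul_apply, smul_eq_mul, ← hχ.map_add]
    exact χ.norm_coe_le_norm _
  exact le_of_mul_le_mul_right hle (norm_pos_iff.2 hχ.ne_zero)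

theorem norm_apply (hχ : IsCharacter χ) (x : K) : ‖χ x‖ = 1 := by
  have hinv : ‖χ x‖ * ‖χ (-x)‖ = 1 := by
    rw [← norm_mul, ← hχ.map_add, add_neg_cancel, hχ.map_zero, norm_one]
  refine le_antisymm (hχ.norm_apply_le_one x) ?_
  calc 1 = ‖χ x‖ * ‖χ (-x)‖ := hinv.symm
    _ ≤ ‖χ x‖ := mul_le_of_le_one_right (norm_nonneg _) (hχ.norm_apply_le_one _)

end IsCharacter

variable [IsTopologicalAddGroup K]

/-- Translation by `y` as a linear endomorphism of `C(K, ℂ)`. -/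
def translateMap (y : K) : Module.End ℂ C(K, ℂ) :=
  (ContinuousMap.compRightAlgHom ℂ ℂ (ContinuousMap.addRight y)).toLinearMap

@[simp]
theorem translateMap_apply (y : K) (v : C(K, ℂ)) (x : K) : translateMap y v x = v (x + y) := rfl

theorem translateMap_commute (y z : K) : Commute (translateMap y) (translateMap z) := by
  ext v x
  simp [add_right_comm]

theorem isCharacter_smul_of_translateMap_eq_smul {v : C(K, ℂ)} (hv : v ≠ 0)
    (h : ∀ y, ∃ c : ℂ, translateMap y v = c • v) : IsCharacter ((v 0)⁻¹ • v) := by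
  have happly : ∀ y, ∃ c : ℂ, ∀ x, v (x + y) = c * v x :=
    fun y => (h y).imp fun c hc x => DFunLike.congr_fun hc x
  choose c hc using happly
  have hc0 : ∀ y, v y = c y * v 0 := fun y => by simpa using hc y 0
  have hv0 : v 0 ≠ 0 := fun h0 => hv (by ext y; simp [hc0 y, h0])
  refine ⟨by simp [hv0], fun x y => ?_⟩
  simp only [ContinuousMap.smul_apply, smul_eq_mul, hc, hc0 x, hc0 y]
  field_simp

theorem exists_isCharacter_mem (F : Submodule ℂ C(K, ℂ)) [FiniteDimensional ℂ F] (hF : F ≠ ⊥)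
    (hinv : ∀ y, ∀ v ∈ F, translateMap y v ∈ F) : ∃ χ ∈ F, IsCharacter χ := by
  obtain ⟨v, hvF, hv0, hv⟩ :=
    exists_mem_forall_apply_eq_smul_of_commute translateMap translateMap_commute F hF hinv
  exact ⟨_, F.smul_mem _ hvF, isCharacter_smul_of_translateMap_eq_smul hv0 hv⟩

end Character

section Convolution

variable {K : Type*} [TopologicalSpace K] [CompactSpace K] [MeasurableSpace K] [BorelSpace K]
  (μ : Measure K) [IsFiniteMeasure μ]

/-- The inclusion of the continuous functions in `L²`. -/
abbrev toL2 : C(K, ℂ) →L[ℂ] Lp ℂ 2 μ := ContinuousMap.toLp 2 μ ℂ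

theorem inner_toL2_left (g : C(K, ℂ)) (f : Lp ℂ 2 μ) :
    inner ℂ (toL2 μ g) f = ∫ y, f y * star (g y) ∂μ := by
  rw [L2.inner_def]
  refine integral_congr_ae ?_
  filter_upwards [ContinuousMap.coeFn_toLp (p := 2) (𝕜 := ℂ) μ g] with y hy
  rw [hy]
  rfl

variable [AddCommGroup K]

/-- The subspace of `L²` spanned by the characters. -/
def characterSpan : Submodule ℂ (Lp ℂ 2 μ) := Submodule.span ℂ (toL2 μ '' {χ | IsCharacter χ})

theorem mem_characterSpan_orthogonal {f : Lp ℂ 2 μ} :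
    f ∈ (characterSpan μ)ᗮ ↔ ∀ χ, IsCharacter χ → inner ℂ (toL2 μ χ) f = 0 := by
  refine ⟨fun h χ hχ => h _ (Submodule.subset_span ⟨χ, hχ, rfl⟩), fun h u hu => ?_⟩
  rw [← Submodule.mem_orthogonal_singleton_iff_inner_left]
  refine Submodule.span_le.2 ?_ hu
  rintro _ ⟨χ, hχ, rfl⟩
  exact Submodule.mem_orthogonal_singleton_iff_inner_left.2 (h χ hχ)

variable [IsTopologicalAddGroup K] {φ χ : C(K, ℂ)}

/-- Convolution with `φ`, as an operator from `L²` to the continuous functions. -/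
def convolutionOperator (φ : C(K, ℂ)) : Lp ℂ 2 μ →L[ℂ] C(K, ℂ) :=
  kernelOperator ((toL2 μ : C(C(K, ℂ), Lp ℂ 2 μ)).comp
    (ContinuousMap.curry ⟨fun q : K × K => star (φ (q.1 - q.2)), by fun_prop⟩))

theorem convolutionOperator_apply (f : Lp ℂ 2 μ) (x : K) :
    convolutionOperator μ φ f x = ∫ y, f y * φ (x - y) ∂μ := by
  refine (inner_toL2_left μ _ f).trans ?_
  simp

theorem convolutionOperator_toL2 (g : C(K, ℂ)) (x : K) :
    convolutionOperator μ φ (toL2 μ g) x = ∫ y, g y * φ (x - y) ∂μ := by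
  rw [convolutionOperator_apply]
  refine integral_congr_ae ?_
  filter_upwards [ContinuousMap.coeFn_toLp (p := 2) (𝕜 := ℂ) μ g] with y hy
  rw [hy]

theorem inner_toL2_convolutionOperator [SecondCountableTopology K]
    (hφ : ∀ x, φ (-x) = star (φ x)) (f g : Lp ℂ 2 μ) :
    inner ℂ (toL2 μ (convolutionOperator μ φ f)) g =
      inner ℂ f (toL2 μ (convolutionOperator μ φ g)) := by
  have hf : Integrable f μ := (Lp.memLp f).integrable one_le_two
  have hg : Integrable g μ := (Lp.memLp g).integrable one_le_two
  have hint : Integrable (Function.uncurry fun x y => g x * star (f y) * star (φ (x - y)))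
      (μ.prod μ) := by
    refine (hg.mul_prod (Complex.conjCLE.toContinuousLinearMap.integrable_comp hf)).mul_bdd
      (c := ‖φ‖) (Continuous.aestronglyMeasurable (by fun_prop)) (.of_forall fun q => ?_)
    exact (norm_star _).trans_le (φ.norm_coe_le_norm _)
  calc inner ℂ (toL2 μ (convolutionOperator μ φ f)) g
      = ∫ x, ∫ y, g x * star (f y) * star (φ (x - y)) ∂μ ∂μ := by
        simp only [inner_toL2_left, convolutionOperator_apply, Complex.star_def, ← integral_conj,
          map_mul, ← integral_const_mul, mul_assoc]
    _ = ∫ y, ∫ x, g x * star (f y) * star (φ (x - y)) ∂μ ∂μ := integral_integral_swap hint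
    _ = star (inner ℂ (toL2 μ (convolutionOperator μ φ g)) f) := by
        simp only [inner_toL2_left, convolutionOperator_apply, Complex.star_def, ← integral_conj,
          map_mul, Complex.conj_conj, ← integral_const_mul]
        refine integral_congr_ae (.of_forall fun y => integral_congr_ae (.of_forall fun x => ?_))
        dsimp only
        rw [← neg_sub x y, hφ, Complex.star_def, mul_left_comm, mul_assoc]
    _ = inner ℂ f (toL2 μ (convolutionOperator μ φ g)) := inner_conj_symm _ _

variable [μ.IsAddLeftInvariant]

theorem convolutionOperator_translateMap (v : C(K, ℂ)) (y : K) :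
    convolutionOperator μ φ (toL2 μ (translateMap y v)) =
      translateMap y (convolutionOperator μ φ (toL2 μ v)) := by
  ext x
  simp only [translateMap_apply, convolutionOperator_toL2]
  rw [← integral_add_right_eq_self (fun z => v z * φ (x + y - z)) y]
  simp

theorem inner_toL2_translateMap (hχ : IsCharacter χ) (v : C(K, ℂ)) (y : K) :
    inner ℂ (toL2 μ χ) (toL2 μ (translateMap y v)) = χ y * inner ℂ (toL2 μ χ) (toL2 μ v) := by
  have hunit : χ y * star (χ y) = 1 := by
    rw [Complex.star_def, Complex.mul_conj', hχ.norm_apply, Complex.ofReal_one, one_pow]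
  rw [ContinuousMap.inner_toLp, ContinuousMap.inner_toLp,
    ← integral_add_right_eq_self (fun z => v z * starRingEnd ℂ (χ z)) y, ← integral_const_mul]
  refine integral_congr_ae (.of_forall fun z => ?_)
  simp only [translateMap_apply, hχ.map_add, map_mul]
  rw [Complex.star_def] at hunit
  linear_combination (-v (z + y) * starRingEnd ℂ (χ z)) * hunit

theorem convolutionOperator_toL2_isCharacter [μ.IsNegInvariant] (hχ : IsCharacter χ) :
    ∃ c : ℂ, convolutionOperator μ φ (toL2 μ χ) = c • χ := by
  refine ⟨∫ z, χ (-z) * φ z ∂μ, ?_⟩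
  ext x
  rw [convolutionOperator_toL2, ← integral_sub_left_eq_self _ μ x, ContinuousMap.smul_apply,
    smul_eq_mul, ← integral_mul_const]
  refine integral_congr_ae (.of_forall fun z => ?_)
  simp only [sub_sub_self]
  rw [sub_eq_add_neg, hχ.map_add]
  ring

theorem toL2_convolutionOperator_mem_characterSpan_orthogonal [μ.IsNegInvariant]
    [SecondCountableTopology K] (hφ : ∀ x, φ (-x) = star (φ x)) (f : Lp ℂ 2 μ)
    (hf : f ∈ (characterSpan μ)ᗮ) :
    toL2 μ (convolutionOperator μ φ f) ∈ (characterSpan μ)ᗮ := by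
  rw [mem_characterSpan_orthogonal] at hf ⊢
  intro χ hχ
  obtain ⟨c, hc⟩ := convolutionOperator_toL2_isCharacter μ (φ := φ) hχ
  rw [← inner_toL2_convolutionOperator μ hφ, hc, map_smul, inner_smul_left, hf χ hχ, mul_zero]

variable [μ.IsOpenPosMeasure]

theorem eigenvalue_eq_zero_of_mem_characterSpan_orthogonal {w : Lp ℂ 2 μ} {c : ℂ}
    (hw : w ∈ (characterSpan μ)ᗮ) (hw0 : w ≠ 0)
    (hwc : toL2 μ (convolutionOperator μ φ w) = c • w) : c = 0 := by
  by_contra hc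
  let T : Lp ℂ 2 μ →L[ℂ] Lp ℂ 2 μ := toL2 μ ∘L convolutionOperator μ φ
  let F : Submodule ℂ C(K, ℂ) :=
    Module.End.eigenspace (convolutionOperator μ φ ∘L toL2 μ).toLinearMap c ⊓
      (characterSpan μ)ᗮ.comap (toL2 μ).toLinearMap
  have hF : ∀ v, v ∈ F ↔
      convolutionOperator μ φ (toL2 μ v) = c • v ∧ toL2 μ v ∈ (characterSpan μ)ᗮ :=
    fun v => and_congr_left' Module.End.mem_eigenspace_iff
  have hfinite : FiniteDimensional ℂ F := by
    have := ContinuousLinearMap.finite_dimensional_eigenspace (T := T)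
      ((isCompactOperator_kernelOperator _).clm_comp (toL2 μ)) c hc
    refine FiniteDimensional.of_injective ((toL2 μ).toLinearMap.restrict (p := F)
      (q := Module.End.eigenspace T.toLinearMap c) fun v hv => ?_)
      fun u v huv => Subtype.ext (ContinuousMap.toLp_injective μ (congrArg Subtype.val huv))
    exact Module.End.mem_eigenspace_iff.2
      ((congrArg (toL2 μ) ((hF v).1 hv).1).trans (map_smul _ _ _))
  have hFbot : F ≠ ⊥ := by
    refine (Submodule.ne_bot_iff F).2 ⟨convolutionOperator μ φ w, (hF _).2 ⟨?_, ?_⟩, fun h0 => ?_⟩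
    · rw [hwc, map_smul]
    · exact hwc ▸ Submodule.smul_mem _ c hw
    · rw [h0, map_zero] at hwc
      exact smul_ne_zero hc hw0 hwc.symm
  obtain ⟨χ, hχF, hχ⟩ := exists_isCharacter_mem F hFbot fun y v hv => by
    simp only [hF, mem_characterSpan_orthogonal] at hv ⊢
    refine ⟨by rw [convolutionOperator_translateMap, hv.1, map_smul], fun ψ hψ => ?_⟩
    rw [inner_toL2_translateMap μ hψ, hv.2 ψ hψ, mul_zero]
  have horth := (mem_characterSpan_orthogonal μ).1 ((hF χ).1 hχF).2 χ hχ
  refine hχ.ne_zero (ContinuousMap.toLp_injective (p := 2) (𝕜 := ℂ) μ ?_)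
  rw [inner_self_eq_zero.1 horth, map_zero]

theorem convolutionOperator_eq_zero_of_mem_characterSpan_orthogonal
    [μ.IsNegInvariant] [SecondCountableTopology K] (hφ : ∀ x, φ (-x) = star (φ x)) {f : Lp ℂ 2 μ}
    (hf : f ∈ (characterSpan μ)ᗮ) : convolutionOperator μ φ f = 0 := by
  have hTf : toL2 μ (convolutionOperator μ φ f) = 0 :=
    apply_eq_zero_of_forall_eigenvalue_eq_zero (T := toL2 μ ∘L convolutionOperator μ φ)
      ((isCompactOperator_kernelOperator _).clm_comp (toL2 μ))
      (inner_toL2_convolutionOperator μ hφ)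
      (toL2_convolutionOperator_mem_characterSpan_orthogonal μ hφ)
      (fun w hw hw0 c hwc => eigenvalue_eq_zero_of_mem_characterSpan_orthogonal μ hw hw0 hwc) hf
  exact ContinuousMap.toLp_injective (p := 2) (𝕜 := ℂ) μ (hTf.trans (map_zero _).symm)

end Convolution

section Separation

variable {K : Type*} [AddCommGroup K] [TopologicalSpace K] [CompactSpace K]

variable (K) in
/-- The star algebra of trigonometric polynomials on `K`. -/
def characterAlgebra : StarSubalgebra ℂ C(K, ℂ) where
  toSubalgebra := Algebra.adjoin ℂ {χ | IsCharacter χ}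
  star_mem' := by
    change Algebra.adjoin ℂ _ ≤ star (Algebra.adjoin ℂ _)
    exact Algebra.adjoin_le fun χ hχ => Algebra.subset_adjoin (IsCharacter.star hχ)

variable (K) in
theorem characterAlgebra_toSubmodule :
    Subalgebra.toSubmodule (characterAlgebra K).toSubalgebra =
      Submodule.span ℂ {χ | IsCharacter χ} := by
  refine Algebra.adjoin_eq_span_of_subset _ (.trans (fun χ hχ => ?_) Submodule.subset_span)
  exact Submonoid.closure_induction (fun _ => id) isCharacter_one (fun _ _ _ _ => IsCharacter.mul)
    hχ

variable [IsTopologicalAddGroup K]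

theorem exists_even_bump_mul_sub_eq_zero [T1Space K] {x : K} (hx : x ≠ 0) :
    ∃ r : C(K, ℝ), r 0 ≠ 0 ∧ (∀ y, r (-y) = r y) ∧ ∀ y, r y * r (x - y) = 0 := by
  obtain ⟨V, hVopen, hV0, hV⟩ := exists_open_nhds_zero_half (isOpen_ne.mem_nhds hx.symm)
  obtain ⟨g, hgV, hg0, -⟩ := exists_continuous_zero_one_of_isClosed hVopen.isClosed_compl
    (isClosed_singleton (x := (0 : K))) (by simpa using hV0)
  refine ⟨⟨fun y => g y * g (-y), by fun_prop⟩, ?_, fun y => ?_, fun y => ?_⟩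
  · simp [hg0 rfl]
  · simp [mul_comm]
  · suffices y ∉ V ∨ x - y ∉ V by
      rcases this with h | h <;> simp [hgV h]
    by_contra! h
    exact hV y h.1 (x - y) h.2 (add_sub_cancel y x)

/- If every character were trivial at `x`, the difference `f` of a bump `φ` and its translate by
`x` would be orthogonal to all characters, so `φ ⋆ f = 0`. For a small bump this fails at `0`. -/
theorem exists_isCharacter_apply_ne_one [T1Space K] [SecondCountableTopology K] {x : K}
    (hx : x ≠ 0) : ∃ χ : C(K, ℂ), IsCharacter χ ∧ χ x ≠ 1 := by
  by_contra! htrivial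
  borelize K
  let μ : Measure K := Measure.addHaar
  obtain ⟨r, hr0, hreven, hrx⟩ := exists_even_bump_mul_sub_eq_zero hx
  let φ : C(K, ℂ) := ⟨fun y => (r y : ℂ), by fun_prop⟩
  have hφ : ∀ y, φ (-y) = star (φ y) := fun y => by simp [φ, hreven]
  have horth : toL2 μ (translateMap x φ) - toL2 μ φ ∈ (characterSpan μ)ᗮ := by
    refine (mem_characterSpan_orthogonal μ).2 fun χ hχ => ?_
    rw [inner_sub_right, inner_toL2_translateMap μ hχ, htrivial χ hχ, one_mul, sub_self]
  have hconv : convolutionOperator μ φ (toL2 μ φ) x = convolutionOperator μ φ (toL2 μ φ) 0 := by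
    have h := convolutionOperator_eq_zero_of_mem_characterSpan_orthogonal μ hφ horth
    rw [map_sub, convolutionOperator_translateMap, sub_eq_zero] at h
    simpa using DFunLike.congr_fun h 0
  have hleft : convolutionOperator μ φ (toL2 μ φ) x = 0 := by
    simp only [convolutionOperator_toL2, φ, ContinuousMap.coe_mk, ← Complex.ofReal_mul, hrx,
      Complex.ofReal_zero, integral_zero]
  have hright : convolutionOperator μ φ (toL2 μ φ) 0 = ↑(∫ y, r y * r y ∂μ) := by
    simp only [convolutionOperator_toL2, φ, ContinuousMap.coe_mk, ← Complex.ofReal_mul, zero_sub,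
      hreven, integral_complex_ofReal]
  have hpos : 0 < ∫ y, r y * r y ∂μ :=
    Continuous.integral_pos_of_hasCompactSupport_nonneg_nonzero (by fun_prop)
      (.of_compactSpace _) (fun y => mul_self_nonneg (r y)) (mul_self_ne_zero.2 hr0)
  rw [hleft, hright, eq_comm, Complex.ofReal_eq_zero] at hconv
  exact hpos.ne' hconv

variable [T1Space K] [SecondCountableTopology K]

variable (K) in
theorem characterAlgebra_separatesPoints : (characterAlgebra K).SeparatesPoints := by
  intro x y hxy
  obtain ⟨χ, hχ, hne⟩ := exists_isCharacter_apply_ne_one (sub_ne_zero.2 hxy)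
  refine ⟨χ, ⟨χ, Algebra.subset_adjoin hχ, rfl⟩, fun h => hne ?_⟩
  rw [sub_eq_add_neg, hχ.map_add, h, ← hχ.map_add, add_neg_cancel, hχ.map_zero]

variable (K) in
theorem topologicalClosure_span_isCharacter :
    (Submodule.span ℂ {χ : C(K, ℂ) | IsCharacter χ}).topologicalClosure = ⊤ := by
  rw [← characterAlgebra_toSubmodule]
  exact congrArg (fun A => Subalgebra.toSubmodule (StarSubalgebra.toSubalgebra A))
    (ContinuousMap.starSubalgebra_topologicalClosure_eq_top_of_separatesPoints _
      (characterAlgebra_separatesPoints K))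

end Separation

section VectorValued

variable {K E : Type*} [TopologicalSpace K] [NormedAddCommGroup E]

theorem exists_norm_sub_sum_smul_lt [CompactSpace K] [T2Space K] [NormedSpace ℝ E] (G : C(K, E))
    {ε : ℝ} (hε : 0 < ε) : ∃ (s : Finset K) (r : s → C(K, ℝ)),
      ∀ x, ‖G x - ∑ y, r y x • G y‖ < ε := by
  let U : K → Set K := fun y => {x | G y ∈ Metric.ball (G x) ε}
  have hUopen : ∀ y, IsOpen (U y) := fun y =>
    isOpen_lt (continuous_const.dist G.continuous) continuous_const
  obtain ⟨s, hs⟩ := isCompact_univ.elim_finite_subcover U hUopen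
    fun x _ => Set.mem_iUnion.2 ⟨x, Metric.mem_ball_self hε⟩
  obtain ⟨r, hr⟩ := PartitionOfUnity.exists_isSubordinate_of_locallyFinite isClosed_univ
    (fun y : s => U y) (fun y => hUopen y) (locallyFinite_of_finite _)
    (by simpa [Set.iUnion_subtype] using hs)
  refine ⟨s, r, fun x => ?_⟩
  have hmem : ∑ᶠ y, r y x • G y ∈ Metric.ball (G x) ε :=
    r.finsum_smul_mem_convex (g := fun y _ => G y) (Set.mem_univ x)
      (fun y hy => hr y (subset_closure hy)) (convex_ball _ _)
  rwa [finsum_eq_sum_of_fintype, mem_ball_iff_norm'] at hmem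

variable (K) in
/-- The operator `φ ↦ (x ↦ φ x • c)` from `C(K, ℂ)` to `C(K, E)`. -/
def smulVector [NormedSpace ℂ E] (c : E) : C(K, ℂ) →L[ℂ] C(K, E) :=
  (ContinuousLinearMap.toSpanSingleton ℂ c).compLeftContinuous ℂ K

theorem smulVector_apply [NormedSpace ℂ E] (c : E) (φ : C(K, ℂ)) (x : K) :
    smulVector K c φ x = φ x • c := rfl

theorem topologicalClosure_iSup_map_smulVector [CompactSpace K] [T2Space K] [NormedSpace ℂ E]
    {W : Submodule ℂ C(K, ℂ)} (hW : W.topologicalClosure = ⊤) :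
    (⨆ c : E, W.map (smulVector K c).toLinearMap).topologicalClosure = ⊤ := by
  set Z := ⨆ c : E, W.map (smulVector K c).toLinearMap
  have htensor : ∀ φ c, smulVector K c φ ∈ Z.topologicalClosure := fun φ c =>
    map_mem_closure (smulVector K c).continuous (hW ▸ Submodule.mem_top : φ ∈ W.topologicalClosure)
      fun ψ hψ => Submodule.mem_iSup_of_mem c (Submodule.mem_map_of_mem hψ)
  refine eq_top_iff.2 fun G _ => ?_
  rw [← SetLike.mem_coe, ← Z.isClosed_topologicalClosure.closure_eq]
  refine Metric.mem_closure_iff.2 fun ε hε => ?_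
  obtain ⟨s, r, hr⟩ := exists_norm_sub_sum_smul_lt G hε
  refine ⟨∑ y : s, smulVector K (G y) ⟨fun x => (r y x : ℂ), by fun_prop⟩,
    Submodule.sum_mem _ fun y _ => htensor _ _, (ContinuousMap.dist_lt_iff hε).2 fun x => ?_⟩
  simpa [dist_eq_norm, smulVector_apply] using hr x

end VectorValued

namespace IsCharacter

theorem comp {G K : Type*} [AddCommGroup G] [TopologicalSpace G] [AddCommGroup K]
    [TopologicalSpace K] {χ : C(K, ℂ)} (hχ : IsCharacter χ) {i : G →+ K} (hi : Continuous i) :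
    IsCharacter (χ.comp ⟨i, hi⟩) where
  map_zero := by simp [hχ.map_zero]
  map_add x y := by simp [hχ.map_add]

variable {χ : C(ℝ, ℂ)}

theorem exists_intervalIntegral_ne_zero (hχ : IsCharacter χ) :
    ∃ d : ℝ, ∫ x in (0 : ℝ)..d, χ x ≠ 0 := by
  by_contra! hzero
  have hderiv : HasDerivAt (fun u => ∫ x in (0 : ℝ)..u, χ x) (χ 0) 0 :=
    (χ.continuous.integral_hasStrictDerivAt 0 0).hasDerivAt
  simp only [hzero, hχ.map_zero] at hderiv
  exact one_ne_zero (hderiv.unique (hasDerivAt_const 0 0))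

theorem intervalIntegral_add (hχ : IsCharacter χ) (t d : ℝ) :
    ∫ x in t..t + d, χ x = χ t * ∫ x in (0 : ℝ)..d, χ x := by
  rw [← intervalIntegral.integral_const_mul]
  simp_rw [← hχ.map_add]
  simp [intervalIntegral.integral_comp_add_left]

theorem exists_hasDerivAt (hχ : IsCharacter χ) : ∃ c, ∀ t, HasDerivAt χ (c * χ t) t := by
  obtain ⟨d, hd⟩ := hχ.exists_intervalIntegral_ne_zero
  set A := ∫ x in (0 : ℝ)..d, χ x
  have hprim : ∀ t, HasDerivAt (fun u => ∫ x in (0 : ℝ)..u, χ x) (χ t) t := fun t =>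
    (χ.continuous.integral_hasStrictDerivAt 0 t).hasDerivAt
  have hχ_eq : ∀ t, χ t = ((∫ x in (0 : ℝ)..t + d, χ x) - ∫ x in (0 : ℝ)..t, χ x) / A := fun t => by
    rw [intervalIntegral.integral_interval_sub_left (χ.continuous.intervalIntegrable _ _)
      (χ.continuous.intervalIntegrable _ _), hχ.intervalIntegral_add, mul_div_cancel_right₀ _ hd]
  refine ⟨(χ d - 1) / A, fun t => ?_⟩
  have h := (((hprim (t + d)).comp_add_const t d).sub (hprim t)).div_const A
  rw [hχ.map_add] at h
  convert! h using 1
  · exact funext hχ_eq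
  · ring

theorem exists_forall_eq_cexp (hχ : IsCharacter χ) :
    ∃ c : ℂ, ∀ t : ℝ, χ t = Complex.exp (c * t) := by
  obtain ⟨c, hc⟩ := hχ.exists_hasDerivAt
  refine ⟨c, fun t => ?_⟩
  have hexp : ∀ t : ℝ, HasDerivAt (fun t : ℝ => Complex.exp (-c * t))
      (Complex.exp (-c * t) * (-c)) t := fun t => by
    simpa using ((hasDerivAt_id (t : ℂ)).const_mul (-c)).cexp.comp_ofReal
  have hconst : ∀ t : ℝ, HasDerivAt (fun t : ℝ => χ t * Complex.exp (-c * t)) 0 t := fun t => by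
    refine ((hc t).mul (hexp t)).congr_deriv ?_
    ring
  have h : χ t * Complex.exp (-c * t) = 1 := by
    simpa [hχ.map_zero] using is_const_of_deriv_eq_zero (fun t => (hconst t).differentiableAt)
      (fun t => (hconst t).deriv) t 0
  rwa [neg_mul, Complex.exp_neg, mul_inv_eq_one₀ (Complex.exp_ne_zero _)] at h

theorem exists_forall_eq_cexp_I_mul (hχ : IsCharacter χ) (hnorm : ∀ t, ‖χ t‖ = 1) :
    ∃ l : ℝ, ∀ t : ℝ, χ t = Complex.exp (Complex.I * (l * t : ℝ)) := by
  obtain ⟨c, hc⟩ := hχ.exists_forall_eq_cexp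
  have hre : c.re = 0 := by
    simpa [hc, Complex.norm_exp] using hnorm 1
  refine ⟨c.im, fun t => ?_⟩
  rw [hc]
  congr 1
  apply Complex.ext <;> simp [hre]

end IsCharacter

/-! ### Uniform approximation by trigonometric polynomials -/

section TrigPoly

variable {X : Type*} [NormedAddCommGroup X] [NormedSpace ℂ X]

variable (X) in
/-- The trigonometric polynomials `ℝ → X` as a complex vector space. -/
def trigPoly : Submodule ℂ (ℝ → X) where
  carrier := {P | IsTrigPoly1 P}
  zero_mem' := ⟨0, Fin.elim0, Fin.elim0, fun _ => by simp⟩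
  add_mem' := by
    rintro P Q ⟨m, l, c, hP⟩ ⟨n, l', c', hQ⟩
    exact ⟨m + n, Fin.append l l', Fin.append c c', fun t => by simp [Fin.sum_univ_add, hP, hQ]⟩
  smul_mem' := by
    rintro a P ⟨m, l, c, hP⟩
    exact ⟨m, l, fun j => a • c j, fun t => by
      simp only [Pi.smul_apply, hP, Finset.smul_sum, smul_comm a]⟩

theorem IsTrigPoly1.continuous {P : ℝ → X} (hP : IsTrigPoly1 P) : Continuous P := by
  obtain ⟨m, l, c, h⟩ := hP
  rw [funext h]
  fun_prop

theorem IsTrigPoly1.exists_norm_le {P : ℝ → X} (hP : IsTrigPoly1 P) : ∃ C, ∀ t, ‖P t‖ ≤ C := by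
  obtain ⟨m, l, c, h⟩ := hP
  refine ⟨∑ j, ‖c j‖, fun t => ?_⟩
  rw [h]
  refine norm_sum_le_of_le _ fun j _ => ?_
  rw [norm_smul, mul_comm Complex.I, Complex.norm_exp_ofReal_mul_I, one_mul]

/-- `g` is a uniform limit of trigonometric polynomials. -/
def TrigApproximable (g : ℝ → X) : Prop :=
  ∀ ε > 0, ∃ P, IsTrigPoly1 P ∧ ∀ t, ‖g t - P t‖ ≤ ε

theorem TrigApproximable.add {g h : ℝ → X} (hg : TrigApproximable g) (hh : TrigApproximable h) :
    TrigApproximable (fun t => g t + h t) := fun ε hε => by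
  obtain ⟨P, hP, hgP⟩ := hg (ε / 2) (half_pos hε)
  obtain ⟨Q, hQ, hhQ⟩ := hh (ε / 2) (half_pos hε)
  refine ⟨P + Q, (trigPoly X).add_mem hP hQ, fun t => ?_⟩
  rw [Pi.add_apply, add_sub_add_comm]
  exact norm_add_le_of_le (hgP t) (hhQ t) |>.trans_eq (add_halves ε)

variable {K : Type*} [AddCommGroup K] [TopologicalSpace K] [CompactSpace K] {i : ℝ →+ K}

theorem IsCharacter.isTrigPoly1_smul {χ : C(K, ℂ)} (hχ : IsCharacter χ) (hi : Continuous i)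
    (c : X) : IsTrigPoly1 (fun t => χ (i t) • c) := by
  obtain ⟨l, hl⟩ := (hχ.comp hi).exists_forall_eq_cexp_I_mul fun t => hχ.norm_apply (i t)
  exact ⟨1, fun _ => l, fun _ => c, fun t => by simpa using congrArg (· • c) (hl t)⟩

theorem isTrigPoly1_comp_of_mem_iSup (hi : Continuous i) {H : C(K, X)}
    (hH : H ∈ ⨆ c : X, (Submodule.span ℂ {χ | IsCharacter χ}).map (smulVector K c).toLinearMap) :
    IsTrigPoly1 (H ∘ i) := by
  let pullback : C(K, X) →ₗ[ℂ] ℝ → X :=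
    { toFun := fun H => H ∘ i, map_add' := fun _ _ => rfl, map_smul' := fun _ _ => rfl }
  suffices ∀ c : X, (Submodule.span ℂ {χ | IsCharacter χ}).map (smulVector K c).toLinearMap ≤
      (trigPoly X).comap pullback from iSup_le this hH
  refine fun c => Submodule.map_le_iff_le_comap.2 (Submodule.span_le.2 fun χ hχ => ?_)
  exact IsCharacter.isTrigPoly1_smul hχ hi c

theorem trigApproximable_comp [IsTopologicalAddGroup K] [T1Space K] [SecondCountableTopology K]
    (hi : Continuous i) (G : C(K, X)) : TrigApproximable (G ∘ i) := fun ε hε => by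
  have hdense := topologicalClosure_iSup_map_smulVector (E := X)
    (topologicalClosure_span_isCharacter K)
  have hG : G ∈ Submodule.topologicalClosure _ := hdense ▸ Submodule.mem_top
  obtain ⟨H, hH, hGH⟩ := Metric.mem_closure_iff.1 hG ε hε
  refine ⟨H ∘ i, isTrigPoly1_comp_of_mem_iSup hi hH, fun t => ?_⟩
  rw [← dist_eq_norm]
  exact (ContinuousMap.dist_apply_le_dist (i t)).trans hGH.le

end TrigPoly

theorem compactSpace_completion_of_totallyBounded {α : Type*} [UniformSpace α]
    (h : TotallyBounded (Set.univ : Set α)) : CompactSpace (UniformSpace.Completion α) := by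
  have hclosure := (h.image (UniformSpace.Completion.uniformContinuous_coe α)).closure
  rw [Set.image_univ, UniformSpace.Completion.denseRange_coe.closure_range] at hclosure
  exact ⟨hclosure.isCompact_of_isClosed isClosed_univ⟩

section SeminormedBy

variable {A : Type*} [AddCommGroup A]

/-- A copy of the group `A` carrying the pseudometric of the seminorm `N`, so as not to clash with
a topology that `A` already has. -/
def SeminormedBy (_ : AddGroupSeminorm A) : Type _ := A

instance (N : AddGroupSeminorm A) : SeminormedAddCommGroup (SeminormedBy N) :=
  AddGroupSeminorm.toSeminormedAddCommGroup (E := A) N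

/-- The identity map `A → SeminormedBy N`. -/
def SeminormedBy.of (N : AddGroupSeminorm A) : A ≃+ SeminormedBy N := AddEquiv.refl A

theorem SeminormedBy.dist_of (N : AddGroupSeminorm A) (x y : A) :
    dist (of N x) (of N y) = N (x - y) := by
  rw [dist_eq_norm, ← map_sub]
  rfl

end SeminormedBy

section TranslationSeminorm

variable {A X : Type*} [AddCommGroup A] [TopologicalSpace A] [IsTopologicalAddGroup A]
  [NormedAddCommGroup X] (g : BoundedContinuousFunction A X)

/-- The seminorm `τ ↦ sup_t ‖g (t + τ) - g t‖` on the domain of a bounded continuous function. -/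
def translationSeminorm : AddGroupSeminorm A where
  toFun τ := ‖g.compContinuous (ContinuousMap.addRight τ) - g‖
  map_zero' := by
    rw [norm_eq_zero, sub_eq_zero]
    ext t
    simp
  add_le' τ σ := by
    refine (BoundedContinuousFunction.norm_le (by positivity)).2 fun t => ?_
    have hτ := BoundedContinuousFunction.norm_coe_le_norm
      (g.compContinuous (ContinuousMap.addRight τ) - g) (t + σ)
    have hσ := BoundedContinuousFunction.norm_coe_le_norm
      (g.compContinuous (ContinuousMap.addRight σ) - g) t
    simpa [add_right_comm, add_assoc] using norm_add_le_of_le hτ hσ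
  neg' τ := by
    have hle : ∀ τ, ‖g.compContinuous (ContinuousMap.addRight (-τ)) - g‖ ≤
        ‖g.compContinuous (ContinuousMap.addRight τ) - g‖ := fun τ => by
      refine (BoundedContinuousFunction.norm_le (norm_nonneg _)).2 fun t => ?_
      simpa [norm_sub_rev] using BoundedContinuousFunction.norm_coe_le_norm
        (g.compContinuous (ContinuousMap.addRight τ) - g) (t + -τ)
    exact (hle τ).antisymm (by simpa using hle (-τ))

variable {g}

theorem norm_sub_le_translationSeminorm (τ t : A) : ‖g (t + τ) - g t‖ ≤ translationSeminorm g τ :=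
  BoundedContinuousFunction.norm_coe_le_norm (g.compContinuous (ContinuousMap.addRight τ) - g) t

theorem translationSeminorm_le {τ : A} {ε : ℝ} (hε : 0 ≤ ε) (h : ∀ t, ‖g (t + τ) - g t‖ ≤ ε) :
    translationSeminorm g τ ≤ ε :=
  (BoundedContinuousFunction.norm_le hε).2 h

variable (g) in
theorem lipschitzWith_comp_seminormedBy_of_symm :
    LipschitzWith 1 (g ∘ (SeminormedBy.of (translationSeminorm g)).symm) := by
  refine .of_dist_le_mul fun x y => ?_
  obtain ⟨x, rfl⟩ := (SeminormedBy.of (translationSeminorm g)).surjective x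
  obtain ⟨y, rfl⟩ := (SeminormedBy.of (translationSeminorm g)).surjective y
  rw [SeminormedBy.dist_of, dist_eq_norm]
  simpa using norm_sub_le_translationSeminorm (x - y) y

end TranslationSeminorm

namespace BohrAP1

variable {X : Type*} [NormedAddCommGroup X]

theorem exists_norm_le {g : ℝ → X} (hg : BohrAP1 g) : ∃ C, ∀ t, ‖g t‖ ≤ C := by
  obtain ⟨hc, h⟩ := hg
  obtain ⟨l, -, h⟩ := h 1 one_pos
  obtain ⟨B, hB⟩ := (isCompact_Icc (a := 0) (b := l)).exists_bound_of_continuousOn hc.continuousOn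
  refine ⟨B + 1, fun t => ?_⟩
  obtain ⟨τ, hτ, ht⟩ := h (-t)
  have hmem : t + τ ∈ Set.Icc 0 l := ⟨by linarith [hτ.1], by linarith [hτ.2]⟩
  exact (norm_le_norm_add_norm_sub _ _).trans (add_le_add (hB _ hmem) (ht t))

theorem uniformContinuous {g : ℝ → X} (hg : BohrAP1 g) : UniformContinuous g := by
  obtain ⟨hc, h⟩ := hg
  refine Metric.uniformContinuous_iff_le.2 fun ε hε => ?_
  obtain ⟨l, -, h⟩ := h (ε / 3) (by positivity)
  obtain ⟨d, hd, hu⟩ := Metric.uniformContinuousOn_iff_le.1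
    ((isCompact_Icc (a := -1) (b := l + 1)).uniformContinuousOn_of_continuous hc.continuousOn)
    (ε / 3) (by positivity)
  refine ⟨min d 1, by positivity, fun {s t} hst => ?_⟩
  obtain ⟨τ, hτ, hτg⟩ := h (-t)
  have hst1 := abs_le.1 (hst.trans (min_le_right _ _))
  have hmid : dist (g (s + τ)) (g (t + τ)) ≤ ε / 3 :=
    hu _ ⟨by linarith [hτ.1], by linarith [hτ.2]⟩ _ ⟨by linarith [hτ.1], by linarith [hτ.2]⟩
      (by simpa using hst.trans (min_le_left _ _))
  calc dist (g s) (g t) ≤ dist (g s) (g (s + τ)) + dist (g (s + τ)) (g (t + τ)) +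
        dist (g (t + τ)) (g t) := dist_triangle4 _ _ _ _
    _ ≤ ε / 3 + ε / 3 + ε / 3 := by
        gcongr
        · rw [dist_comm, dist_eq_norm]; exact hτg s
        · rw [dist_eq_norm]; exact hτg t
    _ = ε := by ring

variable {g : BoundedContinuousFunction ℝ X}

theorem continuous_of_translationSeminorm (hg : BohrAP1 g) :
    Continuous (SeminormedBy.of (translationSeminorm g)) := by
  refine Metric.continuous_iff.2 fun x ε hε => ?_
  obtain ⟨d, hd, h⟩ := Metric.uniformContinuous_iff.1 hg.uniformContinuous (ε / 2) (half_pos hε)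
  refine ⟨d, hd, fun y hy => ?_⟩
  rw [SeminormedBy.dist_of]
  refine (translationSeminorm_le (half_pos hε).le fun t => ?_).trans_lt (half_lt_self hε)
  rw [← dist_eq_norm]
  exact (h (by simpa [dist_eq_norm] using hy)).le

theorem totallyBounded_univ_translationSeminorm (hg : BohrAP1 g) :
    TotallyBounded (Set.univ : Set (SeminormedBy (translationSeminorm g))) := by
  set of := SeminormedBy.of (translationSeminorm g)
  refine Metric.totallyBounded_iff.2 fun ε hε => ?_
  obtain ⟨l, -, h⟩ := hg.2 (ε / 2) (half_pos hε)
  obtain ⟨s, hs, hcover⟩ := Metric.totallyBounded_iff.1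
    ((isCompact_Icc (a := 0) (b := l)).image hg.continuous_of_translationSeminorm).totallyBounded
    (ε / 2) (half_pos hε)
  refine ⟨s, hs, fun x _ => ?_⟩
  obtain ⟨x, rfl⟩ := of.surjective x
  obtain ⟨τ, hτ, hτg⟩ := h (-x)
  obtain ⟨y, hy, hxy⟩ := Set.mem_iUnion₂.1
    (hcover ⟨x + τ, ⟨by linarith [hτ.1], by linarith [hτ.2]⟩, rfl⟩)
  have hdist : dist (of (x + τ)) (of x) ≤ ε / 2 := by
    rw [SeminormedBy.dist_of, add_sub_cancel_left]
    exact translationSeminorm_le (half_pos hε).le hτg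
  refine Set.mem_iUnion₂.2 ⟨y, hy, ?_⟩
  calc dist (of x) y ≤ dist (of (x + τ)) (of x) + dist (of (x + τ)) y := dist_triangle_left _ _ _
    _ < ε / 2 + ε / 2 := add_lt_add_of_le_of_lt hdist hxy
    _ = ε := add_halves ε

theorem exists_factorization [CompleteSpace X] {g : ℝ → X} (hg : BohrAP1 g) :
    ∃ (K : Type) (_ : NormedAddCommGroup K) (_ : CompactSpace K) (i : ℝ →+ K) (G : C(K, X)),
      Continuous i ∧ G ∘ i = g := by
  obtain ⟨C, hC⟩ := hg.exists_norm_le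
  let g' : BoundedContinuousFunction ℝ X := .ofNormedAddCommGroup g hg.1 C hC
  replace hg : BohrAP1 g' := hg
  have hlip := lipschitzWith_comp_seminormedBy_of_symm g'
  let N := translationSeminorm g'
  refine ⟨UniformSpace.Completion (SeminormedBy N), inferInstance,
    compactSpace_completion_of_totallyBounded hg.totallyBounded_univ_translationSeminorm,
    UniformSpace.Completion.toCompl.comp (SeminormedBy.of N).toAddMonoidHom,
    ⟨UniformSpace.Completion.extension (g' ∘ (SeminormedBy.of N).symm),
      UniformSpace.Completion.continuous_extension⟩,
    (UniformSpace.Completion.continuous_coe _).comp hg.continuous_of_translationSeminorm, ?_⟩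
  ext t
  exact UniformSpace.Completion.extension_coe hlip.uniformContinuous (SeminormedBy.of N t)

theorem trigApproximable [NormedSpace ℂ X] [CompleteSpace X] {g : ℝ → X} (hg : BohrAP1 g) :
    TrigApproximable g := by
  obtain ⟨K, _, _, i, G, hi, rfl⟩ := hg.exists_factorization
  exact trigApproximable_comp hi G

end BohrAP1

/-! ### Exponentially decaying kernels -/

theorem rpow_lintegral_mul_le {S : Type*} [MeasurableSpace S] {μ : Measure S} {w g : S → ℝ≥0∞}
    (hw : AEMeasurable w μ) (hg : AEMeasurable g μ) {q : ℝ} (hq : 1 ≤ q) :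
    (∫⁻ r, w r * g r ∂μ) ^ q ≤ (∫⁻ r, w r * g r ^ q ∂μ) * (∫⁻ r, w r ∂μ) ^ (q - 1) := by
  have hq0 : 0 < q := by positivity
  have hac := withDensity_absolutelyContinuous μ w
  have h := ENNReal.rpow_le_rpow (eLpNorm'_le_eLpNorm'_mul_rpow_measure_univ
    (μ := μ.withDensity w) one_pos hq (hg.mono_ac hac).aestronglyMeasurable) hq0.le
  simpa only [eLpNorm', enorm_eq_self, ENNReal.rpow_one, one_div, inv_one,
    ENNReal.mul_rpow_of_nonneg _ _ hq0.le, ← ENNReal.rpow_mul, inv_mul_cancel₀ hq0.ne', sub_mul,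
    one_mul, withDensity_apply _ MeasurableSet.univ, Measure.restrict_univ,
    lintegral_withDensity_eq_lintegral_mul₀ hw hg,
    lintegral_withDensity_eq_lintegral_mul₀ hw (hg.pow_const q), Pi.mul_apply] using h

theorem integrable_exp_neg_mul_abs {ω : ℝ} (hω : 0 < ω) :
    Integrable fun s : ℝ => Real.exp (-ω * |s|) := by
  rw [← integrableOn_univ, ← Set.Iic_union_Ioi (a := 0), integrableOn_union]
  constructor
  · refine (integrableOn_exp_mul_Iic hω 0).congr_fun (fun x hx => ?_) measurableSet_Iic
    simp [abs_of_nonpos (Set.mem_Iic.1 hx)]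
  · refine (integrableOn_exp_mul_Ioi (neg_lt_zero.2 hω) 0).congr_fun (fun x hx => ?_)
      measurableSet_Ioi
    simp [abs_of_pos (Set.mem_Ioi.1 hx)]

section ExpKernel

/-- The kernel `e^{-ω|x|}` with values in `ℝ≥0∞`, for use in Lebesgue integrals. -/
def expKernel (ω x : ℝ) : ℝ≥0∞ := ENNReal.ofReal (Real.exp (-ω * |x|))

theorem measurable_expKernel (ω : ℝ) : Measurable (expKernel ω) := by
  unfold expKernel
  fun_prop

theorem lintegral_expKernel_ne_top {ω : ℝ} (hω : 0 < ω) : ∫⁻ x, expKernel ω x ≠ ∞ :=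
  (integrable_exp_neg_mul_abs hω).lintegral_lt_top.ne

theorem expKernel_sub_eq_mul {s c r : ℝ} (ω : ℝ) (h : s ≤ c ∧ c ≤ r ∨ r ≤ c ∧ c ≤ s) :
    expKernel ω (s - r) = expKernel ω (c - s) * expKernel ω (c - r) := by
  have habs : |s - r| = |c - s| + |c - r| := by
    rw [abs_sub_comm c s]
    simpa using (abs_add_eq_add_abs_iff (s - c) (c - r)).2 (by simpa [and_comm] using h.symm)
  rw [expKernel, habs, mul_add, Real.exp_add, ENNReal.ofReal_mul (Real.exp_pos _).le]
  rfl

theorem expKernel_sub_le_of_mem_of_notMem (ω : ℝ) {b c s r : ℝ} (hs : s ∈ Set.Icc b c)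
    (hr : r ∉ Set.Icc b c) :
    expKernel ω (s - r) ≤ (expKernel ω (c - s) + expKernel ω (b - s)) *
      (expKernel ω (c - r) + expKernel ω (b - r)) := by
  rcases lt_or_ge c r with hcr | hrc
  · rw [expKernel_sub_eq_mul ω (.inl ⟨hs.2, hcr.le⟩)]
    exact mul_le_mul' le_self_add le_self_add
  · have hrb : r ≤ b := le_of_not_ge fun hbr => hr ⟨hbr, hrc⟩
    rw [expKernel_sub_eq_mul ω (.inr ⟨hrb, hs.1⟩)]
    exact mul_le_mul' le_add_self le_add_self

/- Mass of `H` far outside `[b, c]` is only seen near the two endpoints, whence an error independent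
of the length of the interval. -/
theorem setLIntegral_lintegral_expKernel_mul_le (ω : ℝ) {H : ℝ → ℝ≥0∞} (hH : AEMeasurable H)
    {B : ℝ≥0∞} (hB : ∀ r, H r ≤ B) (b c : ℝ) :
    ∫⁻ s in Set.Icc b c, ∫⁻ r, expKernel ω (s - r) * H r ≤
      (∫⁻ x, expKernel ω x) * (∫⁻ r in Set.Icc b c, H r) +
        B * (2 * ∫⁻ x, expKernel ω x) ^ 2 := by
  set m := ∫⁻ x, expKernel ω x
  have hE := measurable_expKernel ω
  set F : ℝ → ℝ≥0∞ := fun r => expKernel ω (c - r) + expKernel ω (b - r)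
  have hF : Measurable F := by fun_prop
  have hFm : ∫⁻ r, F r = 2 * m := by
    rw [lintegral_add_left (by fun_prop), lintegral_sub_left_eq_self,
      lintegral_sub_left_eq_self, two_mul]
  have hslice : ∀ r, ∫⁻ s in Set.Icc b c, expKernel ω (s - r) * H r ≤
      (Set.Icc b c).indicator (fun r => m * H r) r + 2 * m * B * F r := fun r => by
    rw [lintegral_mul_const _ (by fun_prop)]
    by_cases hr : r ∈ Set.Icc b c
    · rw [Set.indicator_of_mem hr]
      refine le_add_right ?_
      gcongr
      exact (setLIntegral_le_lintegral _ _).trans_eq (lintegral_sub_right_eq_self _ r)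
    · refine le_add_left ?_
      calc (∫⁻ s in Set.Icc b c, expKernel ω (s - r)) * H r
          ≤ (∫⁻ s in Set.Icc b c, F s * F r) * B := by
            refine mul_le_mul' (setLIntegral_mono' measurableSet_Icc fun s hs => ?_) (hB r)
            exact expKernel_sub_le_of_mem_of_notMem ω hs hr
        _ ≤ (∫⁻ s, F s * F r) * B := by gcongr; exact Measure.restrict_le_self
        _ = 2 * m * B * F r := by rw [lintegral_mul_const _ hF, hFm]; ring
  calc ∫⁻ s in Set.Icc b c, ∫⁻ r, expKernel ω (s - r) * H r
      = ∫⁻ r, ∫⁻ s in Set.Icc b c, expKernel ω (s - r) * H r := by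
        refine lintegral_lintegral_swap (.mul ?_ hH.comp_snd)
        exact (hE.comp (measurable_fst.sub measurable_snd)).aemeasurable
    _ ≤ ∫⁻ r, ((Set.Icc b c).indicator (fun r => m * H r) r + 2 * m * B * F r) :=
        lintegral_mono hslice
    _ = m * (∫⁻ r in Set.Icc b c, H r) + B * (2 * m) ^ 2 := by
        rw [lintegral_add_right _ (by fun_prop), lintegral_indicator measurableSet_Icc,
          lintegral_const_mul'' _ hH.restrict, lintegral_const_mul _ hF, hFm]
        ring

end ExpKernel

theorem aestronglyMeasurable_apply {S 𝕜 X Y : Type*} [MeasurableSpace S] {μ : Measure S}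
    [NontriviallyNormedField 𝕜] [NormedAddCommGroup X] [NormedSpace 𝕜 X] [NormedAddCommGroup Y]
    [NormedSpace 𝕜 Y] {A : S → X →L[𝕜] Y} (hA : ∀ x, AEStronglyMeasurable (fun s => A s x) μ)
    {f : S → X} (hf : AEStronglyMeasurable f μ) : AEStronglyMeasurable (fun s => A s (f s)) μ := by
  have hsimple : ∀ g : SimpleFunc S X, AEStronglyMeasurable (fun s => A s (g s)) μ := fun g => by
    induction g using SimpleFunc.induction with
    | @const c T hT =>
      refine ((hA c).indicator hT).congr (.of_forall fun s => ?_)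
      by_cases h : s ∈ T <;> simp [h]
    | add _ hg hh => simpa using! hg.add hh
  refine (aestronglyMeasurable_of_tendsto_ae (u := atTop)
    (fun n => hsimple (hf.stronglyMeasurable_mk.approx n)) (g := fun s => A s (hf.mk f s))
    (.of_forall fun s => ?_)).congr ?_
  · exact ((A s).continuous.tendsto _).comp (hf.stronglyMeasurable_mk.tendsto_approx s)
  · filter_upwards [hf.ae_eq_mk] with s hs
    rw [← hs]

section Decay

variable {𝕜 X Y : Type*} [NontriviallyNormedField 𝕜] [NormedAddCommGroup X] [NormedSpace 𝕜 X]
  [NormedAddCommGroup Y] [NormedSpace 𝕜 Y]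

/-- The operator kernel `Γ` decays exponentially, at rate `ω` and with constant `M`, away from the
diagonal. -/
def HasExpDecay (Γ : ℝ → ℝ → X →L[𝕜] Y) (M ω : ℝ) : Prop :=
  ∀ t s : ℝ, ‖Γ t s‖ ≤ M * Real.exp (-ω * |t - s|)

namespace HasExpDecay

variable {Γ : ℝ → ℝ → X →L[𝕜] Y} {M ω : ℝ}

theorem nonneg (hΓ : HasExpDecay Γ M ω) : 0 ≤ M := by
  simpa using (norm_nonneg _).trans (hΓ 0 0)

theorem norm_apply_le (hΓ : HasExpDecay Γ M ω) (t s : ℝ) {x : X} {C : ℝ} (hx : ‖x‖ ≤ C) :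
    ‖Γ t s x‖ ≤ M * Real.exp (-ω * |t - s|) * C :=
  (Γ t s).le_of_opNorm_le_of_le (hΓ t s) hx

theorem integrable (hΓ : HasExpDecay Γ M ω) (hω : 0 < ω) {t : ℝ}
    (hΓmeas : ∀ x, AEStronglyMeasurable fun s => Γ t s x) {f : ℝ → X}
    (hf : AEStronglyMeasurable f) {C : ℝ} (hC : ∀ s, ‖f s‖ ≤ C) :
    Integrable fun s => Γ t s (f s) :=
  (((integrable_exp_neg_mul_abs hω).comp_sub_left t).const_mul M |>.mul_const C).mono'
    (aestronglyMeasurable_apply hΓmeas hf) (.of_forall fun s => hΓ.norm_apply_le t s (hC s))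

variable [NormedSpace ℝ Y]

theorem norm_integral_le (hΓ : HasExpDecay Γ M ω) (hω : 0 < ω) {f : ℝ → X} {C : ℝ}
    (hC : ∀ s, ‖f s‖ ≤ C) (t : ℝ) :
    ‖∫ s, Γ t s (f s)‖ ≤ M * (∫ x, Real.exp (-ω * |x|)) * C := by
  calc ‖∫ s, Γ t s (f s)‖ ≤ ∫ s, M * Real.exp (-ω * |t - s|) * C :=
        norm_integral_le_of_norm_le
          (((integrable_exp_neg_mul_abs hω).comp_sub_left t).const_mul M |>.mul_const C)
          (.of_forall fun s => hΓ.norm_apply_le t s (hC s))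
    _ = M * (∫ x, Real.exp (-ω * |x|)) * C := by
        rw [integral_mul_const, integral_const_mul,
          integral_sub_left_eq_self (fun x => Real.exp (-ω * |x|)) volume t]

theorem continuous_integral (hΓ : HasExpDecay Γ M ω) (hω : 0 < ω)
    (hΓmeas : ∀ t x, AEStronglyMeasurable fun s => Γ t s x)
    (hΓcont : ∀ s x, ContinuousOn (fun t => Γ t s x) {s}ᶜ) {f : ℝ → X}
    (hf : AEStronglyMeasurable f) {C : ℝ} (hC : ∀ s, ‖f s‖ ≤ C) :
    Continuous fun t => ∫ s, Γ t s (f s) := by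
  refine continuous_iff_continuousAt.2 fun t₀ => continuousAt_of_dominated
    (bound := fun s => M * (Real.exp ω * Real.exp (-ω * |t₀ - s|)) * C)
    (.of_forall fun t => aestronglyMeasurable_apply (hΓmeas t) hf) ?_
    (((integrable_exp_neg_mul_abs hω).comp_sub_left t₀).const_mul (Real.exp ω) |>.const_mul M
      |>.mul_const C) ?_
  · filter_upwards [Metric.ball_mem_nhds t₀ one_pos] with t ht
    refine .of_forall fun s => (hΓ.norm_apply_le t s (hC s)).trans ?_
    have habs : |t₀ - s| ≤ |t - s| + 1 := by
      rw [Metric.mem_ball, Real.dist_eq, abs_sub_comm] at ht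
      linarith [abs_sub_le t₀ t s]
    rw [← Real.exp_add]
    have := hΓ.nonneg
    have := (norm_nonneg _).trans (hC s)
    gcongr
    nlinarith
  · filter_upwards [compl_mem_ae_iff.2 (measure_singleton t₀)] with s hs
    exact (hΓcont s (f s)).continuousAt (isOpen_compl_singleton.mem_nhds (Ne.symm hs))

theorem enorm_integral_le (hΓ : HasExpDecay Γ M ω) (h : ℝ → X) (s : ℝ) :
    ‖∫ r, Γ s r (h r)‖ₑ ≤ ENNReal.ofReal M * ∫⁻ r, expKernel ω (s - r) * ‖h r‖ₑ := by
  refine (enorm_integral_le_lintegral_enorm _).trans ?_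
  rw [← lintegral_const_mul' _ _ ENNReal.ofReal_ne_top]
  refine lintegral_mono fun r => ?_
  rw [expKernel, ← ofReal_norm, ← ofReal_norm, ← mul_assoc, ← ENNReal.ofReal_mul hΓ.nonneg,
    ← ENNReal.ofReal_mul' (norm_nonneg _)]
  exact ENNReal.ofReal_le_ofReal (hΓ.norm_apply_le s r le_rfl)

theorem enorm_integral_rpow_le (hΓ : HasExpDecay Γ M ω) {h : ℝ → X} (hh : AEStronglyMeasurable h)
    {q : ℝ} (hq : 1 ≤ q) (s : ℝ) :
    ‖∫ r, Γ s r (h r)‖ₑ ^ q ≤ ENNReal.ofReal M ^ q * (∫⁻ x, expKernel ω x) ^ (q - 1) *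
      ∫⁻ r, expKernel ω (s - r) * ‖h r‖ₑ ^ q := by
  have hq0 : 0 ≤ q := by positivity
  have hw : Measurable fun r => expKernel ω (s - r) :=
    (measurable_expKernel ω).comp (measurable_const.sub measurable_id)
  calc ‖∫ r, Γ s r (h r)‖ₑ ^ q
      ≤ (ENNReal.ofReal M * ∫⁻ r, expKernel ω (s - r) * ‖h r‖ₑ) ^ q := by
        gcongr
        exact hΓ.enorm_integral_le h s
    _ = ENNReal.ofReal M ^ q * (∫⁻ r, expKernel ω (s - r) * ‖h r‖ₑ) ^ q :=
        ENNReal.mul_rpow_of_nonneg _ _ hq0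
    _ ≤ ENNReal.ofReal M ^ q * ((∫⁻ r, expKernel ω (s - r) * ‖h r‖ₑ ^ q) *
          (∫⁻ r, expKernel ω (s - r)) ^ (q - 1)) := by
        gcongr
        exact rpow_lintegral_mul_le hw.aemeasurable hh.enorm hq
    _ = _ := by
        rw [lintegral_sub_left_eq_self]
        ring

theorem setLIntegral_enorm_integral_rpow_le (hΓ : HasExpDecay Γ M ω) (hω : 0 < ω) {h : ℝ → X}
    (hh : AEStronglyMeasurable h) {B : ℝ≥0∞} (hB : ∀ r, ‖h r‖ₑ ≤ B) {q : ℝ} (hq : 1 ≤ q)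
    (b c : ℝ) :
    ∫⁻ s in Set.Icc b c, ‖∫ r, Γ s r (h r)‖ₑ ^ q ≤
      ENNReal.ofReal M ^ q * (∫⁻ x, expKernel ω x) ^ (q - 1) *
        ((∫⁻ x, expKernel ω x) * (∫⁻ r in Set.Icc b c, ‖h r‖ₑ ^ q) +
          B ^ q * (2 * ∫⁻ x, expKernel ω x) ^ 2) := by
  have hq0 : 0 ≤ q := by positivity
  refine (lintegral_mono fun s => hΓ.enorm_integral_rpow_le hh hq s).trans ?_
  rw [lintegral_const_mul' _ _ (ENNReal.mul_ne_top
    (ENNReal.rpow_ne_top_of_nonneg hq0 ENNReal.ofReal_ne_top)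
    (ENNReal.rpow_ne_top_of_nonneg (sub_nonneg.2 hq) (lintegral_expKernel_ne_top hω)))]
  gcongr
  exact setLIntegral_lintegral_expKernel_mul_le ω (hh.enorm.pow_const q)
    (fun r => ENNReal.rpow_le_rpow (hB r) hq0) b c

end HasExpDecay

end Decay

/-! ### The Besicovitch class -/

section GrowthGauge

/-- The functional `limsup_{t → ∞} t^{-a} I(t)^{1/p}` measuring the approximation error in the
definition of the Besicovitch class, where `I(t)` is an integral over `[-t, t]`. -/
def growthGauge (a p : ℝ) (I : ℝ → ℝ≥0∞) : ℝ≥0∞ :=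
  limsup (fun t : ℝ => ENNReal.ofReal (t ^ (-a)) * I t ^ (1 / p)) atTop

variable {a p : ℝ}

theorem growthGauge_mono (hp : 0 ≤ p) {I J : ℝ → ℝ≥0∞} (h : I ≤ᶠ[atTop] J) :
    growthGauge a p I ≤ growthGauge a p J := by
  refine limsup_le_limsup (h.mono fun t ht => ?_)
  dsimp only
  gcongr

theorem growthGauge_const_mul (hp : 0 ≤ p) {A : ℝ≥0∞} (hA : A ≠ ∞) (I : ℝ → ℝ≥0∞) :
    growthGauge a p (fun t => A * I t) = A ^ (1 / p) * growthGauge a p I := by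
  have hp' : 0 ≤ 1 / p := one_div_nonneg.2 hp
  rw [growthGauge, growthGauge,
    ← ENNReal.limsup_const_mul_of_ne_top (ENNReal.rpow_ne_top_of_nonneg hp' hA)]
  simp_rw [ENNReal.mul_rpow_of_nonneg _ _ hp', mul_left_comm]

theorem growthGauge_max (hp : 0 ≤ p) (I J : ℝ → ℝ≥0∞) :
    growthGauge a p (fun t => max (I t) (J t)) = max (growthGauge a p I) (growthGauge a p J) := by
  have hmono : Monotone fun x : ℝ≥0∞ => x ^ (1 / p) :=
    ENNReal.monotone_rpow_of_nonneg (one_div_nonneg.2 hp)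
  simp only [growthGauge, hmono.map_max, mul_max]
  exact limsup_max

theorem growthGauge_add_le (hp : 0 ≤ p) (I J : ℝ → ℝ≥0∞) :
    growthGauge a p (fun t => I t + J t) ≤
      2 ^ (1 / p) * max (growthGauge a p I) (growthGauge a p J) := by
  rw [← growthGauge_max hp, ← growthGauge_const_mul hp ENNReal.ofNat_ne_top]
  refine growthGauge_mono hp (.of_forall fun t => ?_)
  dsimp only
  rw [two_mul]
  exact add_le_add (le_max_left _ _) (le_max_right _ _)

theorem growthGauge_ofReal_mul_le (hp : 0 < p) (hap : 1 ≤ a * p) (ε : ℝ≥0∞) :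
    growthGauge a p (fun t => ENNReal.ofReal t * ε) ≤ ε ^ (1 / p) := by
  refine limsup_le_of_le (h := ?_)
  filter_upwards [eventually_ge_atTop 1] with t ht
  have hp' : 0 ≤ 1 / p := by positivity
  have ht0 : 0 < t := one_pos.trans_le ht
  rw [ENNReal.mul_rpow_of_nonneg _ _ hp', ← mul_assoc, ENNReal.ofReal_rpow_of_nonneg ht0.le hp',
    ← ENNReal.ofReal_mul (by positivity), ← Real.rpow_add ht0]
  refine mul_le_of_le_one_left' (ENNReal.ofReal_le_one.2 ?_)
  exact Real.rpow_le_one_of_one_le_of_nonpos ht (by linarith [(div_le_iff₀ hp).2 hap])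

end GrowthGauge

section Besicovitch

variable {X Y : Type*} [NormedAddCommGroup X] [NormedSpace ℂ X] [NormedAddCommGroup Y]
  [NormedSpace ℂ Y]

/- An error term of linear growth is admissible exactly because `a * p ≥ 1`. -/
theorem MemBes1.of_lintegral_le {a α p : ℝ} {f : ℝ → X} {u : ℝ → Y} (hf : MemBes1 α a p f)
    (hp : 0 < p) (hap : 1 ≤ a * p) {A : ℝ≥0∞} (hA : A ≠ ∞)
    (h : ∀ P, IsTrigPoly1 P → ∀ ε : ℝ≥0∞, ε ≠ 0 → ∃ Q, IsTrigPoly1 Q ∧ ∀ᶠ t : ℝ in atTop,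
      ∫⁻ s in Set.Icc (-t) t, ENNReal.ofReal (‖u s - Q s‖ ^ (α * p)) ≤
        A * (∫⁻ s in Set.Icc (-t) t, ENNReal.ofReal (‖f s - P s‖ ^ (α * p))) +
          ENNReal.ofReal t * ε) :
    MemBes1 α a p u := by
  obtain ⟨P, hP, hPlim⟩ := hf
  have hp' : 0 < 1 / p := by positivity
  choose Q hQ hQP using fun k : ℕ => h (P k) (hP k) (k : ℝ≥0∞)⁻¹ (by simp)
  set G : ℕ → ℝ≥0∞ := fun k => growthGauge a p fun t =>
    ∫⁻ s in Set.Icc (-t) t, ENNReal.ofReal (‖f s - P k s‖ ^ (α * p))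
  have hbound : ∀ k, growthGauge a p (fun t =>
      ∫⁻ s in Set.Icc (-t) t, ENNReal.ofReal (‖u s - Q k s‖ ^ (α * p))) ≤
      2 ^ (1 / p) * max (A ^ (1 / p) * G k) ((k : ℝ≥0∞)⁻¹ ^ (1 / p)) := fun k => by
    refine (growthGauge_mono hp.le (hQP k)).trans ((growthGauge_add_le hp.le _ _).trans ?_)
    rw [growthGauge_const_mul hp.le hA]
    gcongr
    exact growthGauge_ofReal_mul_le hp hap _
  have hlim : Tendsto (fun k : ℕ => 2 ^ (1 / p) * max (A ^ (1 / p) * G k)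
      ((k : ℝ≥0∞)⁻¹ ^ (1 / p))) atTop (𝓝 0) := by
    have hG : Tendsto (fun k => A ^ (1 / p) * G k) atTop (𝓝 (A ^ (1 / p) * 0)) :=
      ENNReal.Tendsto.const_mul hPlim (.inr (ENNReal.rpow_ne_top_of_nonneg hp'.le hA))
    have hε := ENNReal.tendsto_inv_nat_nhds_zero.ennrpow_const (1 / p)
    rw [ENNReal.zero_rpow_of_pos hp'] at hε
    simpa using ENNReal.Tendsto.const_mul (hG.max hε)
      (.inr (ENNReal.rpow_ne_top_of_nonneg hp'.le ENNReal.ofNat_ne_top))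
  exact ⟨Q, hQ, tendsto_of_tendsto_of_tendsto_of_le_of_le tendsto_const_nhds hlim
    (fun _ => zero_le) hbound⟩

end Besicovitch

theorem lintegral_enorm_add_rpow_le {S Y : Type*} [MeasurableSpace S] {μ : Measure S}
    [NormedAddCommGroup Y] (v : S → Y) {w : S → Y} {δ : ℝ≥0∞} (hw : ∀ s, ‖w s‖ₑ ≤ δ) {q : ℝ}
    (hq : 1 ≤ q) :
    ∫⁻ s, ‖v s + w s‖ₑ ^ q ∂μ ≤ 2 ^ (q - 1) * (∫⁻ s, ‖v s‖ₑ ^ q ∂μ + δ ^ q * μ Set.univ) := by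
  have hq0 : 0 ≤ q := by positivity
  calc ∫⁻ s, ‖v s + w s‖ₑ ^ q ∂μ
      ≤ ∫⁻ s, 2 ^ (q - 1) * (‖v s‖ₑ ^ q + δ ^ q) ∂μ := lintegral_mono fun s => by
        refine le_trans ?_ (ENNReal.rpow_add_le_mul_rpow_add_rpow _ _ hq)
        exact ENNReal.rpow_le_rpow ((enorm_add_le _ _).trans (add_le_add_right (hw s) _)) hq0
    _ = 2 ^ (q - 1) * (∫⁻ s, ‖v s‖ₑ ^ q ∂μ + δ ^ q * μ Set.univ) := by
        rw [lintegral_const_mul' _ _ (ENNReal.rpow_ne_top_of_nonneg (sub_nonneg.2 hq)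
          ENNReal.ofNat_ne_top), lintegral_add_right _ measurable_const, lintegral_const]

theorem eventually_le_ofReal_mul {D ε : ℝ≥0∞} (hD : D ≠ ∞) (hε : ε ≠ 0) :
    ∀ᶠ t : ℝ in atTop, D ≤ ENNReal.ofReal t * ε := by
  have h := ENNReal.Tendsto.mul_const (b := ε) ENNReal.tendsto_ofReal_atTop (.inl top_ne_zero)
  rw [ENNReal.top_mul hε] at h
  exact (h.eventually (lt_mem_nhds hD.lt_top)).mono fun _ => le_of_lt

theorem exists_pos_mul_ofReal_rpow_le {C ε : ℝ≥0∞} (hC : C ≠ ∞) (hε : ε ≠ 0) {q : ℝ}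
    (hq : 0 < q) : ∃ δ > 0, C * ENNReal.ofReal δ ^ q ≤ ε := by
  have h : Tendsto (fun δ : ℝ => C * ENNReal.ofReal δ ^ q) (𝓝[>] 0) (𝓝 0) := by
    have hδ := (ENNReal.tendsto_ofReal (tendsto_id (α := ℝ) (x := 𝓝 0))).ennrpow_const q
    have := ENNReal.Tendsto.const_mul (a := C) hδ (.inr hC)
    rw [ENNReal.ofReal_zero, ENNReal.zero_rpow_of_pos hq, mul_zero] at this
    exact this.mono_left nhdsWithin_le_nhds
  obtain ⟨δ, hδ, hpos⟩ :=
    ((h.eventually (gt_mem_nhds hε.bot_lt)).and self_mem_nhdsWithin).exists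
  exact ⟨δ, hpos, hδ.le⟩

namespace HasExpDecay

variable {X Y : Type*} [NormedAddCommGroup X] [NormedSpace ℂ X] [NormedAddCommGroup Y]
  [NormedSpace ℂ Y] {Γ : ℝ → ℝ → X →L[ℂ] Y} {M ω : ℝ}

theorem trigApproximable_integral [CompleteSpace Y] (hΓ : HasExpDecay Γ M ω) (hω : 0 < ω)
    (hΓmeas : ∀ t x, AEStronglyMeasurable fun s => Γ t s x) {P : ℝ → X} (hP : IsTrigPoly1 P)
    (hleft : BohrAP1 fun t => ∫ s in Set.Iio t, Γ t s (P s))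
    (hright : BohrAP1 fun t => ∫ s in Set.Ioi t, Γ t s (P s)) :
    TrigApproximable fun t => ∫ s, Γ t s (P s) := by
  obtain ⟨C, hC⟩ := hP.exists_norm_le
  convert hleft.trigApproximable.add hright.trigApproximable using 2 with t
  have hint := hΓ.integrable hω (hΓmeas t) hP.continuous.aestronglyMeasurable hC
  rw [← integral_Iic_eq_integral_Iio,
    intervalIntegral.integral_Iic_add_Ioi hint.integrableOn hint.integrableOn]

theorem exists_setLIntegral_sub_rpow_le (hΓ : HasExpDecay Γ M ω) (hω : 0 < ω)
    (hΓmeas : ∀ t x, AEStronglyMeasurable fun s => Γ t s x) {q : ℝ} (hq : 1 ≤ q) :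
    ∃ A ≠ ∞, ∀ f P : ℝ → X, AEStronglyMeasurable f → AEStronglyMeasurable P →
      (∃ C, ∀ s, ‖f s‖ ≤ C) → (∃ C, ∀ s, ‖P s‖ ≤ C) → ∃ D ≠ ∞, ∀ b c,
        ∫⁻ t in Set.Icc b c, ‖(∫ s, Γ t s (f s)) - ∫ s, Γ t s (P s)‖ₑ ^ q ≤
          A * (∫⁻ s in Set.Icc b c, ‖f s - P s‖ₑ ^ q) + D := by
  have hq0 : 0 ≤ q := by positivity
  have hm := lintegral_expKernel_ne_top hω
  set m := ∫⁻ x, expKernel ω x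
  set L := ENNReal.ofReal M ^ q * m ^ (q - 1)
  have hL : L ≠ ∞ := ENNReal.mul_ne_top (ENNReal.rpow_ne_top_of_nonneg hq0 ENNReal.ofReal_ne_top)
    (ENNReal.rpow_ne_top_of_nonneg (sub_nonneg.2 hq) hm)
  refine ⟨L * m, ENNReal.mul_ne_top hL hm, fun f P hf hP ⟨Cf, hCf⟩ ⟨CP, hCP⟩ => ?_⟩
  set B := ENNReal.ofReal (Cf + CP)
  refine ⟨L * (B ^ q * (2 * m) ^ 2), by finiteness, fun b c => ?_⟩
  have hsub : ∀ t, (∫ s, Γ t s (f s)) - ∫ s, Γ t s (P s) = ∫ s, Γ t s (f s - P s) := fun t => by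
    simp only [map_sub]
    exact (integral_sub (hΓ.integrable hω (hΓmeas t) hf hCf)
      (hΓ.integrable hω (hΓmeas t) hP hCP)).symm
  have hB : ∀ s, ‖f s - P s‖ₑ ≤ B := fun s =>
    (ofReal_norm _).symm.trans_le (ENNReal.ofReal_le_ofReal (norm_sub_le_of_le (hCf s) (hCP s)))
  simp_rw [hsub, mul_assoc, ← mul_add]
  exact hΓ.setLIntegral_enorm_integral_rpow_le hω (hf.sub hP) hB hq b c

theorem memBes1_integral (hΓ : HasExpDecay Γ M ω) (hω : 0 < ω)
    (hΓmeas : ∀ t x, AEStronglyMeasurable fun s => Γ t s x)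
    (hΓtrig : ∀ P, IsTrigPoly1 P → TrigApproximable fun t => ∫ s, Γ t s (P s)) {a α p : ℝ}
    (hp : 0 < p) (hαp : 1 ≤ α * p) (hap : 1 ≤ a * p) {f : ℝ → X} (hf : AEStronglyMeasurable f)
    (hfbdd : ∃ C, ∀ s, ‖f s‖ ≤ C) (hfbes : MemBes1 α a p f) :
    MemBes1 α a p fun t => ∫ s, Γ t s (f s) := by
  have hq0 : 0 < α * p := by positivity
  obtain ⟨A, hA, hAf⟩ := hΓ.exists_setLIntegral_sub_rpow_le hω hΓmeas hαp
  have hK : (2 : ℝ≥0∞) ^ (α * p - 1) ≠ ∞ :=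
    ENNReal.rpow_ne_top_of_nonneg (sub_nonneg.2 hαp) ENNReal.ofNat_ne_top
  set K : ℝ≥0∞ := 2 ^ (α * p - 1)
  refine hfbes.of_lintegral_le hp hap (ENNReal.mul_ne_top hK hA) fun P hP ε hε => ?_
  have hε' : ε / 2 ≠ 0 := (ENNReal.half_pos hε).ne'
  obtain ⟨D, hD, hPD⟩ := hAf f P hf hP.continuous.aestronglyMeasurable hfbdd hP.exists_norm_le
  obtain ⟨δ, hδ, hδε⟩ := exists_pos_mul_ofReal_rpow_le (C := 2 * K) (by finiteness) hε' hq0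
  obtain ⟨Q, hQ, hPQ⟩ := hΓtrig P hP δ hδ
  refine ⟨Q, hQ, ?_⟩
  filter_upwards [eventually_le_ofReal_mul (ENNReal.mul_ne_top hK hD) hε'] with t ht
  have hw : ∀ s, ‖(∫ r, Γ s r (P r)) - Q s‖ₑ ≤ ENNReal.ofReal δ := fun s =>
    (ofReal_norm _).symm.trans_le (ENNReal.ofReal_le_ofReal (hPQ s))
  simp_rw [← ENNReal.ofReal_rpow_of_nonneg (norm_nonneg _) hq0.le, ofReal_norm]
  calc ∫⁻ s in Set.Icc (-t) t, ‖(∫ r, Γ s r (f r)) - Q s‖ₑ ^ (α * p)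
      = ∫⁻ s in Set.Icc (-t) t,
          ‖((∫ r, Γ s r (f r)) - ∫ r, Γ s r (P r)) + ((∫ r, Γ s r (P r)) - Q s)‖ₑ ^ (α * p) := by
        simp only [sub_add_sub_cancel]
    _ ≤ K * ((∫⁻ s in Set.Icc (-t) t, ‖(∫ r, Γ s r (f r)) - ∫ r, Γ s r (P r)‖ₑ ^ (α * p)) +
          ENNReal.ofReal δ ^ (α * p) * volume (Set.Icc (-t) t)) := by
        rw [← Measure.restrict_apply_univ]
        exact lintegral_enorm_add_rpow_le _ hw hαp
    _ ≤ K * ((A * ∫⁻ s in Set.Icc (-t) t, ‖f s - P s‖ₑ ^ (α * p)) + D +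
          ENNReal.ofReal δ ^ (α * p) * (2 * ENNReal.ofReal t)) := by
        gcongr
        · exact hPD (-t) t
        · rw [Real.volume_Icc, sub_neg_eq_add, ← two_mul, ENNReal.ofReal_mul zero_le_two,
            ENNReal.ofReal_ofNat]
    _ = K * A * (∫⁻ s in Set.Icc (-t) t, ‖f s - P s‖ₑ ^ (α * p)) +
          (K * D + ENNReal.ofReal t * (2 * K * ENNReal.ofReal δ ^ (α * p))) := by ring
    _ ≤ K * A * (∫⁻ s in Set.Icc (-t) t, ‖f s - P s‖ₑ ^ (α * p)) +
          (ENNReal.ofReal t * (ε / 2) + ENNReal.ofReal t * (ε / 2)) := by gcongr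
    _ = _ := by rw [← mul_add, ENNReal.add_halves]

end HasExpDecay

section OffDiagonal

variable {S E : Type*} [TopologicalSpace S] [TopologicalSpace E] {g : S × S → E}

theorem continuousOn_compl_singleton_left (hg : ContinuousOn g {q | q.1 ≠ q.2}) (s : S) :
    ContinuousOn (fun t => g (t, s)) {s}ᶜ :=
  hg.comp (Continuous.prodMk_left s).continuousOn fun _ ht => ht

theorem continuousOn_compl_singleton_right (hg : ContinuousOn g {q | q.1 ≠ q.2}) (t : S) :
    ContinuousOn (fun s => g (t, s)) {t}ᶜ :=
  hg.comp (Continuous.prodMk_right t).continuousOn fun _ hs => Ne.symm hs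

theorem aestronglyMeasurable_of_continuousOn_compl_singleton [T1Space S]
    [TopologicalSpace.PseudoMetrizableSpace E] [SecondCountableTopologyEither S E]
    [MeasurableSpace S] [OpensMeasurableSpace S]
    {μ : Measure S} [NullSingletonClass μ] {h : S → E} {t : S} (hh : ContinuousOn h {t}ᶜ) :
    AEStronglyMeasurable h μ := by
  have hrestrict : μ.restrict {t}ᶜ = μ :=
    Measure.restrict_eq_self_of_ae_mem (compl_mem_ae_iff.2 (measure_singleton t))
  exact hrestrict ▸ hh.aestronglyMeasurable (measurableSet_singleton t).compl

end OffDiagonal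

theorem besicovitch_stmt18_general {X Y : Type*} [NormedAddCommGroup X] [NormedSpace ℂ X]
    [NormedAddCommGroup Y] [NormedSpace ℂ Y] [CompleteSpace Y] (Γ : ℝ → ℝ → X →L[ℂ] Y)
    (hΓmeas : ∀ t x, AEStronglyMeasurable fun s => Γ t s x)
    (hΓcont : ∀ s x, ContinuousOn (fun t => Γ t s x) {s}ᶜ)
    (M ω : ℝ) (hω : 0 < ω) (hΓ : HasExpDecay Γ M ω)
    (hBohr : ∀ P : ℝ → X, IsTrigPoly1 P →
      BohrAP1 (fun t : ℝ => ∫ s in Set.Iio t, Γ t s (P s)) ∧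
      BohrAP1 (fun t : ℝ => ∫ s in Set.Ioi t, Γ t s (P s)))
    (a α p : ℝ) (hp : 0 < p) (hαp : 1 ≤ α * p) (hap : 1 ≤ a * p)
    (f : ℝ → X) (hfmeas : AEStronglyMeasurable f)
    (hfbdd : ∃ C : ℝ, ∀ t : ℝ, ‖f t‖ ≤ C)
    (hf : MemBes1 α a p f) :
    (∀ t : ℝ, Integrable (fun s : ℝ => Γ t s (f s))) ∧
    (∃ C : ℝ, ∀ t : ℝ, ‖∫ s : ℝ, Γ t s (f s)‖ ≤ C) ∧
    Continuous (fun t : ℝ => ∫ s : ℝ, Γ t s (f s)) ∧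
    MemBes1 α a p (fun t : ℝ => ∫ s : ℝ, Γ t s (f s)) := by
  have hΓtrig : ∀ P, IsTrigPoly1 P → TrigApproximable fun t => ∫ s, Γ t s (P s) := fun P hP =>
    hΓ.trigApproximable_integral hω hΓmeas hP (hBohr P hP).1 (hBohr P hP).2
  obtain ⟨C, hC⟩ := hfbdd
  exact ⟨fun t => hΓ.integrable hω (hΓmeas t) hfmeas hC,
    ⟨_, hΓ.norm_integral_le hω hC⟩,
    hΓ.continuous_integral hω hΓmeas hΓcont hfmeas hC,
    hΓ.memBes1_integral hω hΓmeas hΓtrig hp hαp hap hfmeas ⟨C, hC⟩ hf⟩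

/-- the mild solution `u(t) = ∫_ℝ Γ(t,s) f(s) ds` associated with an
exponentially decaying Green's function is bounded, continuous and belongs to
`e-(x^α,t^{−a})-B^p(ℝ : X)` whenever `f` does. -/
theorem besicovitch_stmt18 {X : Type*}
    [NormedAddCommGroup X] [NormedSpace ℂ X] [CompleteSpace X]
    (Γ : ℝ → ℝ → X →L[ℂ] X)
    (hΓcont : ∀ x : X, ContinuousOn (fun q : ℝ × ℝ => Γ q.1 q.2 x) {q | q.1 ≠ q.2})
    (M ω : ℝ) (hM : 0 < M) (hω : 0 < ω)
    (hΓ : ∀ t s : ℝ, ‖Γ t s‖ ≤ M * Real.exp (-ω * |t - s|))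
    (hBohr : ∀ P : ℝ → X, IsTrigPoly1 P →
      BohrAP1 (fun t : ℝ => ∫ s in Set.Iio t, Γ t s (P s)) ∧
      BohrAP1 (fun t : ℝ => ∫ s in Set.Ioi t, Γ t s (P s)))
    (a α p : ℝ) (ha : 0 < a) (hα : 0 < α) (hp : 1 ≤ p)
    (hαp : 1 ≤ α * p) (hap : 1 ≤ a * p)
    (f : ℝ → X) (hfmeas : StronglyMeasurable f)
    (hfbdd : ∃ C : ℝ, ∀ t : ℝ, ‖f t‖ ≤ C)
    (hf : MemBes1 α a p f) :
    (∀ t : ℝ, Integrable (fun s : ℝ => Γ t s (f s))) ∧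
    (∃ C : ℝ, ∀ t : ℝ, ‖∫ s : ℝ, Γ t s (f s)‖ ≤ C) ∧
    Continuous (fun t : ℝ => ∫ s : ℝ, Γ t s (f s)) ∧
    MemBes1 α a p (fun t : ℝ => ∫ s : ℝ, Γ t s (f s)) :=
  besicovitch_stmt18_general Γ
    (fun t x => aestronglyMeasurable_of_continuousOn_compl_singleton
      (continuousOn_compl_singleton_right (hΓcont x) t))
    (fun s x => continuousOn_compl_singleton_left (hΓcont x) s)
    M ω hω hΓ hBohr a α p (one_pos.trans_le hp) hαp hap f hfmeas.aestronglyMeasurable hfbdd hf
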